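/- Let V ⊂ ℝ^d be open and bounded, and let (R^V, R^{*,V}) be positive linear operators on bounded Borel functions that are in duality with respect to Lebesgue measure: ∫ (R^V f) g = ∫ f (R^{*,V} g) for all bounded nonnegative Borel f, g, with ‖R^{*,V} g‖_∞ ≤ C ‖g‖_∞. Extend R^V to finite positive Borel measures β on V by the same duality: ∫ (R^V β) g dx := ∫ (R^{*,V} g) dβ. If β_n → β weakly in the dual of C_b(V) (with sup_n β_n(V) < ∞) and R^{*,V} maps bounded Borel functions into C_b(V) (strong Feller), then R^V β_n → R^V β weakly in L¹(V), and in particular the sequence (R^V β_n) is uniformly integrable on V. -/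

import Mathlib

open MeasureTheory Set Filter
open scoped Topology ENNReal

variable {d : ℕ}

local notation "E" => EuclideanSpace ℝ (Fin d)

/-- Weak `L¹` convergence of Green potentials: if `β_n → β` weak-* in the dual of
`C_b(V)` with bounded masses, `R^{*,V}` is strongly Feller and bounded, and
`f_n = R^V β_n`, `f = R^V β` are the potentials defined by the duality
`∫_V (R^V β) g dx = ∫ (R^{*,V} g) dβ`, then `R^V β_n → R^V β` weakly in `L¹(V)` and
the sequence `(R^V β_n)` is uniformly integrable on `V`. -/
theorem stmt9 (V : Set E) (hVo : IsOpen V) (hVb : Bornology.IsBounded V)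
    (Rstar : (EuclideanSpace ℝ (Fin d) → ℝ) → EuclideanSpace ℝ (Fin d) → ℝ)
    (hRpos : ∀ g : E → ℝ, (∀ x, 0 ≤ g x) → ∀ x, 0 ≤ Rstar g x)
    (C : ℝ) (hRbdd : ∀ (g : E → ℝ) (M : ℝ), Measurable g → (∀ x, |g x| ≤ M) →
      ∀ x, |Rstar g x| ≤ C * M)
    (hSF : ∀ g : E → ℝ, Measurable g → (∃ M, ∀ x, |g x| ≤ M) →
      ContinuousOn (Rstar g) V)
    (βn : ℕ → Measure (EuclideanSpace ℝ (Fin d))) (β : Measure (EuclideanSpace ℝ (Fin d)))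
    [∀ n, IsFiniteMeasure (βn n)] [IsFiniteMeasure β]
    (hβnV : ∀ n, βn n Vᶜ = 0) (hβV : β Vᶜ = 0)
    (Mmass : ℝ) (hmass : ∀ n, (βn n univ).toReal ≤ Mmass)
    (hweak : ∀ g : E → ℝ, ContinuousOn g V → (∃ M, ∀ x, |g x| ≤ M) →
      Tendsto (fun n => ∫ x, g x ∂(βn n)) atTop (𝓝 (∫ x, g x ∂β)))
    (fn : ℕ → EuclideanSpace ℝ (Fin d) → ℝ) (f : EuclideanSpace ℝ (Fin d) → ℝ)
    (hfnmeas : ∀ n, AEStronglyMeasurable (fn n) (volume.restrict V))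
    (hfnint : ∀ n, IntegrableOn (fn n) V) (hfint : IntegrableOn f V)
    (hdualn : ∀ n, ∀ g : E → ℝ, Measurable g → (∀ x, 0 ≤ g x) → (∃ M, ∀ x, |g x| ≤ M) →
      ∫ x in V, fn n x * g x = ∫ x, Rstar g x ∂(βn n))
    (hdual : ∀ g : E → ℝ, Measurable g → (∀ x, 0 ≤ g x) → (∃ M, ∀ x, |g x| ≤ M) →
      ∫ x in V, f x * g x = ∫ x, Rstar g x ∂β) :
    (∀ ξ : E → ℝ, Measurable ξ → (∃ M, ∀ x, |ξ x| ≤ M) →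
      Tendsto (fun n => ∫ x in V, fn n x * ξ x) atTop (𝓝 (∫ x in V, f x * ξ x))) ∧
    UnifIntegrable fn 1 (volume.restrict V) := by
  have key : ∀ g : E → ℝ, Measurable g → (∀ x, 0 ≤ g x) → (∃ M, ∀ x, |g x| ≤ M) →
      Tendsto (fun n => ∫ x in V, fn n x * g x) atTop (𝓝 (∫ x in V, f x * g x)) := by
    intro g hg hg0 hgb
    rw [hdual g hg hg0 hgb]
    simp_rw [fun n => hdualn n g hg hg0 hgb]
    obtain ⟨M, hM⟩ := hgb
    exact hweak _ (hSF g hg ⟨M, hM⟩) ⟨C * M, hRbdd g M hg hM⟩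
  have hmulint : ∀ (h g : E → ℝ), IntegrableOn h V → Measurable g → (∃ M, ∀ x, |g x| ≤ M) →
      Integrable (fun x => h x * g x) (volume.restrict V) := by
    rintro h g hh hg ⟨M, hM⟩
    exact Integrable.mul_bdd (c := M) hh hg.aestronglyMeasurable
      (Eventually.of_forall fun x => by simpa using hM x)
  refine ⟨?_, ?_⟩
  · rintro ξ hξ ⟨M, hM⟩
    have hM0 : 0 ≤ M := (abs_nonneg _).trans (hM 0)
    have hpm : Measurable (fun x => max (ξ x) 0) := hξ.max measurable_const
    have hnm : Measurable (fun x => max (-ξ x) 0) := hξ.neg.max measurable_const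
    have hpb : ∃ M, ∀ x, |(fun x => max (ξ x) 0) x| ≤ M := ⟨M, fun x => by
      have := abs_le.1 (hM x)
      simp only [abs_of_nonneg (le_max_right (ξ x) 0)]
      exact max_le this.2 hM0⟩
    have hnb : ∃ M, ∀ x, |(fun x => max (-ξ x) 0) x| ≤ M := ⟨M, fun x => by
      have := abs_le.1 (hM x)
      simp only [abs_of_nonneg (le_max_right (-ξ x) 0)]
      exact max_le (by linarith) hM0⟩
    have hsplit : ∀ h : E → ℝ, IntegrableOn h V → ∫ x in V, h x * ξ x =
        (∫ x in V, h x * max (ξ x) 0) - ∫ x in V, h x * max (-ξ x) 0 := by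
      intro h hh
      rw [← integral_sub (hmulint h _ hh hpm hpb) (hmulint h _ hh hnm hnb)]
      congr 1
      ext x
      rw [← mul_sub]
      congr 1
      rcases le_total 0 (ξ x) with hx | hx
      · rw [max_eq_left hx, max_eq_right (by linarith)]; ring
      · rw [max_eq_right hx, max_eq_left (by linarith)]; ring
    rw [hsplit f hfint]
    simp_rw [fun n => hsplit (fn n) (hfnint n)]
    exact (key _ hpm (fun x => le_max_right _ _) hpb).sub
      (key _ hnm (fun x => le_max_right _ _) hnb)
  · -- indicators as test functions
    have hind : ∀ s : Set E, MeasurableSet s → Measurable (s.indicator (fun _ => (1 : ℝ))) ∧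
        (∀ x, 0 ≤ s.indicator (fun _ => (1 : ℝ)) x) ∧
        (∃ M, ∀ x, |s.indicator (fun _ => (1 : ℝ)) x| ≤ M) := by
      intro s hs
      refine ⟨measurable_const.indicator hs, fun x => indicator_nonneg (by simp) x, 1, fun x => ?_⟩
      by_cases hx : x ∈ s <;> simp [hx]
    have hindeq : ∀ (h : E → ℝ) (s : Set E), MeasurableSet s →
        ∫ x in V, h x * s.indicator (fun _ => (1 : ℝ)) x =
          ∫ x in s, h x ∂(volume.restrict V) := by
      intro h s hs
      rw [← integral_indicator hs]
      congr 1
      ext x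
      by_cases hx : x ∈ s <;> simp [hx]
    have hpos : ∀ n, 0 ≤ᵐ[volume.restrict V] fn n := by
      intro n
      refine ae_nonneg_of_forall_setIntegral_nonneg (hfnint n) fun s hs _ => ?_
      obtain ⟨h1, h2, h3⟩ := hind s hs
      rw [← hindeq _ s hs, hdualn n _ h1 h2 h3]
      exact integral_nonneg (hRpos _ h2)
    have hnorm : ∀ n s, MeasurableSet s → eLpNorm (s.indicator (fn n)) 1 (volume.restrict V) =
        ENNReal.ofReal (∫ x in s, fn n x ∂(volume.restrict V)) := by
      intro n s hs
      rw [eLpNorm_indicator_eq_eLpNorm_restrict hs, eLpNorm_one_eq_lintegral_enorm,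
        ← ofReal_integral_norm_eq_lintegral_enorm (Integrable.restrict (hfnint n))]
      congr 1
      refine integral_congr_ae ?_
      filter_upwards [ae_restrict_of_ae (hpos n)] with x hx
      exact Real.norm_of_nonneg hx
    have hconv : ∀ s, MeasurableSet s →
        Tendsto (fun n => ∫ x in s, fn n x ∂(volume.restrict V)) atTop
          (𝓝 (∫ x in s, f x ∂(volume.restrict V))) := by
      intro s hs
      obtain ⟨h1, h2, h3⟩ := hind s hs
      have := key _ h1 h2 h3
      rw [hindeq f s hs] at this
      simpa only [fun n => hindeq (fn n) s hs] using this
    -- tail estimate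
    have htail : ∀ ε : ℝ, 0 < ε → ∃ N : ℕ, ∀ n ≥ N, ∀ s, MeasurableSet s →
        volume.restrict V s ≤ ENNReal.ofReal ((1 / 2) ^ N) →
        ∫ x in s, fn n x ∂(volume.restrict V) ≤ ε := by
      intro ε hε
      by_contra! hcon
      choose k hk A hA hAm hAi using hcon
      let B : ℕ → Set E := fun m => ⋃ j, A (j + m)
      have hB : ∀ m, MeasurableSet (B m) := fun m => MeasurableSet.iUnion fun j => hA _
      have hsum : ∑' j, volume.restrict V (A j) ≠ ∞ := by
        refine ne_top_of_le_ne_top ?_ (ENNReal.tsum_le_tsum hAm)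
        rw [← ENNReal.ofReal_tsum_of_nonneg (fun n => by positivity) summable_geometric_two]
        exact ENNReal.ofReal_ne_top
      have hB0 : Tendsto (volume.restrict V ∘ B) atTop (𝓝 0) :=
        tendsto_of_tendsto_of_tendsto_of_le_of_le tendsto_const_nhds
          (ENNReal.tendsto_sum_nat_add _ hsum) (fun _ => zero_le) (fun m => measure_iUnion_le _)
      have hf0 := Integrable.tendsto_setIntegral_nhds_zero hfint hB0
      have hge : ∀ m, ε ≤ ∫ x in B m, f x ∂(volume.restrict V) := by
        intro m
        have hkt : Tendsto k atTop atTop := tendsto_atTop_mono hk tendsto_id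
        refine ge_of_tendsto ((hconv _ (hB m)).comp hkt) ?_
        filter_upwards [eventually_ge_atTop m] with j hj
        refine (hAi j).le.trans ?_
        refine setIntegral_mono_set (Integrable.restrict (hfnint _))
          (ae_restrict_of_ae (hpos _)) (HasSubset.Subset.eventuallyLE ?_)
        have : A j = A ((j - m) + m) := by rw [Nat.sub_add_cancel hj]
        rw [this]
        exact subset_iUnion (fun i => A (i + m)) (j - m)
      have := ge_of_tendsto hf0 (Eventually.of_forall hge)
      linarith
    intro ε hε
    obtain ⟨N, hN⟩ := htail ε hε
    have hfin : UnifIntegrable (fun i : Fin N => fn i) 1 (volume.restrict V) :=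
      unifIntegrable_finite le_rfl ENNReal.one_ne_top
        (fun i => memLp_one_iff_integrable.2 (hfnint i))
    obtain ⟨δ, hδ, hδ'⟩ := hfin hε
    refine ⟨min δ ((1 / 2) ^ N), lt_min hδ (by positivity), fun n s hs hμ => ?_⟩
    rcases lt_or_ge n N with hn | hn
    · exact hδ' ⟨n, hn⟩ s hs (hμ.trans (ENNReal.ofReal_le_ofReal (min_le_left _ _)))
    · rw [hnorm n s hs]
      exact ENNReal.ofReal_le_ofReal (hN n hn s hs
        (hμ.trans (ENNReal.ofReal_le_ofReal (min_le_right _ _))))
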